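/- With s_B = inf{s ≥ 0 : P_B(s) ≤ 0} for B ∈ (1,∞), one has lim_{B→1⁺} s_B = 1 and lim_{B→∞} s_B = 1/2. -/

import Mathlib

/-!
Everything follows from elementary bounds on `∑ q_n ^ (-2s)` over words of length `n`.

* The cylinder of a word has length `1 / (q_n (q_n + q_{n-1}))`, and these lengths sum to `1`
  (`tsum_cyl`). Hence `1 ≤ ∑ q_n ^ (-2) ≤ 2`, and at `s = 1`, where the exponent `3s - 1 - s²` is
  `1`, the pressure is at most `-log B < 0`. Thus `s_B ≤ 1` (`pressure_one`).
* Since `q_n ≥ (5/4)^n` for large `n`, for `s ≤ 1 - ε` the sum `∑ q_n ^ (-2s)` is at least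
  `(5/4)^(2εn)`, while `B ^ (-n(3s-1-s²)) ≥ B ^ (-n)`. Hence the pressure is positive on
  `[0, 1 - ε]` once `log B < ε log (5/4)` (`pressure_pos_of_near_one`), so `s_B → 1` as `B → 1⁺`.
* For `s ≤ 1/2` the sum diverges, like the harmonic series, so `s_B ≥ 1/2`
  (`pressure_pos_of_le_half`).
* For `s > 1/2`, `q_n ≥ a_1 ⋯ a_n` gives `∑ q_n ^ (-2s) ≤ ζ(2s)^n`, and `3s - 1 - s² > 0` for
  `1/2 < s < 1`. Hence the pressure is at most `0` as soon as `B` is large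
  (`pressure_nonpos_of_large`), so `s_B → 1/2` as `B → ∞`.

The sums over words are computed by induction on the length, splitting off the first letter; for
this the continuant recursion is started from an arbitrary pair `(q_k, q_{k-1}) = (p, r)`.
-/

open scoped ENNReal
open MeasureTheory Filter

/-- The Gauss map `T(x) = 1/x - ⌊1/x⌋`. -/
noncomputable def gaussMap (x : ℝ) : ℝ := 1 / x - ⌊1 / x⌋

/-- The `n`-th partial quotient `a_n(x) = ⌊1 / T^{n-1}(x)⌋` (for `n ≥ 1`). -/
noncomputable def pq (x : ℝ) (n : ℕ) : ℕ := ⌊1 / (gaussMap^[n - 1] x)⌋₊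

/-- The set `F₂(φ)` of irrational `x ∈ (0,1)` such that for infinitely many `n` there are
`1 ≤ k ≠ l ≤ n` with `a_k a_{k+1} ≥ φ(n)` and `a_l a_{l+1} ≥ φ(n)`. -/
def F2 (φ : ℕ → ℝ) : Set ℝ :=
  {x | x ∈ Set.Ioo (0 : ℝ) 1 ∧ Irrational x ∧
    {n : ℕ | ∃ k l : ℕ, 1 ≤ k ∧ k ≤ n ∧ 1 ≤ l ∧ l ≤ n ∧ k ≠ l ∧
      φ n ≤ (pq x k : ℝ) * (pq x (k + 1) : ℝ) ∧
      φ n ≤ (pq x l : ℝ) * (pq x (l + 1) : ℝ)}.Infinite}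

/-- The continuant `q_n(a_1,…,a_n)` of a word, via `q_{-1} = 0`, `q_0 = 1`,
`q_n = a_n q_{n-1} + q_{n-2}` (the pair holds `(q_{k}, q_{k-1})`). -/
def contQ (l : List ℕ) : ℕ :=
  (l.foldl (fun p a => (a * p.1 + p.2, p.1)) ((1 : ℕ), (0 : ℕ))).1

/-- `Σ_{(a_1,…,a_n) ∈ ℕⁿ} B^{-n(3s-1-s²)} q_n(a_1,…,a_n)^{-2s}` as an extended nonnegative
real number. -/
noncomputable def presSum (B s : ℝ) (n : ℕ) : ℝ≥0∞ :=
  ∑' v : Fin n → ℕ+,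
    ENNReal.ofReal (B ^ (-(n : ℝ) * (3 * s - 1 - s ^ 2)) *
      (contQ (List.ofFn fun i => ((v i : ℕ))) : ℝ) ^ (-(2 * s)))

/-- The pressure function `P_B(s) = lim_n (1/n) log presSum B s n ∈ (-∞,∞]`
(the limit exists, hence equals the `limsup`). -/
noncomputable def pressure (B s : ℝ) : EReal :=
  Filter.atTop.limsup fun n : ℕ => (((n : ℝ)⁻¹ : ℝ) : EReal) * ENNReal.log (presSum B s n)

/-- `s_B = inf {s ≥ 0 : P_B(s) ≤ 0}`. -/
noncomputable def sB (B : ℝ) : ℝ := sInf {s : ℝ | 0 ≤ s ∧ pressure B s ≤ 0}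

/-! ### The continuant recursion -/

/-- The pair `(q_{k+n}, q_{k+n-1})` obtained by running the continuant recursion along a word of
length `n` from the pair `(q_k, q_{k-1}) = x`. -/
def contState (x : ℕ × ℕ) (l : List ℕ) : ℕ × ℕ :=
  l.foldl (fun p a => (a * p.1 + p.2, p.1)) x

theorem contState_cons (x : ℕ × ℕ) (a : ℕ) (l : List ℕ) :
    contState x (a :: l) = contState (a * x.1 + x.2, x.1) l := rfl

/-- The word of natural numbers underlying a tuple of positive integers. -/
def wordOf {n : ℕ} (v : Fin n → ℕ+) : List ℕ := List.ofFn fun i => (v i : ℕ)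

theorem wordOf_cons {n : ℕ} (a : ℕ+) (v : Fin n → ℕ+) :
    wordOf (Fin.cons a v : Fin (n + 1) → ℕ+) = (a : ℕ) :: wordOf v := by
  simp [wordOf, List.ofFn_succ]

theorem tsum_word_succ (n : ℕ) (g : List ℕ → ℝ≥0∞) :
    ∑' v : Fin (n + 1) → ℕ+, g (wordOf v) =
      ∑' a : ℕ+, ∑' v : Fin n → ℕ+, g ((a : ℕ) :: wordOf v) := by
  rw [← (Fin.consEquiv (fun _ : Fin (n + 1) => ℕ+)).tsum_eq, ENNReal.tsum_prod']
  refine tsum_congr fun a => tsum_congr fun v => ?_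
  rw [← wordOf_cons]
  rfl

theorem step_le {p r : ℕ} (a : ℕ+) : p ≤ (a : ℕ) * p + r := by
  have := a.pos
  nlinarith

/-- The continuants of a word are positive and nondecreasing. -/
theorem contState_spec {n : ℕ} (v : Fin n → ℕ+) :
    ∀ x : ℕ × ℕ, 0 < x.1 → x.2 ≤ x.1 →
      0 < (contState x (wordOf v)).1 ∧ (contState x (wordOf v)).2 ≤ (contState x (wordOf v)).1 := by
  induction n with
  | zero => intro x h1 h2; simpa [contState, wordOf] using ⟨h1, h2⟩
  | succ n ih =>
    intro x h1 h2
    obtain ⟨a, w, rfl⟩ : ∃ a w, v = Fin.cons a w := ⟨v 0, Fin.tail v, (Fin.cons_self_tail v).symm⟩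
    rw [wordOf_cons, contState_cons]
    exact ih w _ (lt_of_lt_of_le h1 (step_le a)) (step_le a)

/-- The linear form `3/2 q_k + q_{k-1}` grows at least by the factor `3/2` at each step. -/
theorem contState_growth {n : ℕ} (v : Fin n → ℕ+) :
    ∀ x : ℕ × ℕ, (3 / 2 : ℝ) ^ n * (3 / 2 * x.1 + x.2) ≤
      3 / 2 * (contState x (wordOf v)).1 + (contState x (wordOf v)).2 := by
  induction n with
  | zero => intro x; simp [contState, wordOf]
  | succ n ih =>
    intro x
    obtain ⟨a, w, rfl⟩ : ∃ a w, v = Fin.cons a w := ⟨v 0, Fin.tail v, (Fin.cons_self_tail v).symm⟩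
    rw [wordOf_cons, contState_cons]
    refine le_trans ?_ (ih w _)
    rw [pow_succ, mul_assoc]
    refine mul_le_mul_of_nonneg_left ?_ (by positivity)
    have ha : (1 : ℝ) ≤ (a : ℕ) := by exact_mod_cast a.pos
    have h1 : (0 : ℝ) ≤ x.1 := by positivity
    push_cast
    nlinarith

theorem contQ_pos {n : ℕ} (v : Fin n → ℕ+) : 0 < contQ (wordOf v) :=
  (contState_spec v (1, 0) one_pos zero_le_one).1

theorem one_le_contQ {n : ℕ} (v : Fin n → ℕ+) : (1 : ℝ) ≤ contQ (wordOf v) := by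
  exact_mod_cast contQ_pos v

theorem contQ_growth {n : ℕ} (hn : 3 ≤ n) (v : Fin n → ℕ+) :
    (5 / 4 : ℝ) ^ n ≤ contQ (wordOf v) := by
  have h := contState_growth v (1, 0)
  have h2 : ((contState (1, 0) (wordOf v)).2 : ℝ) ≤ (contState (1, 0) (wordOf v)).1 := by
    exact_mod_cast (contState_spec v (1, 0) one_pos zero_le_one).2
  have h3 : (contQ (wordOf v) : ℝ) = (contState (1, 0) (wordOf v)).1 := rfl
  have h4 : (6 / 5 : ℝ) ^ 3 ≤ (6 / 5 : ℝ) ^ n := pow_le_pow_right₀ (by norm_num) hn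
  have h5 : (3 / 2 : ℝ) ^ n = (5 / 4) ^ n * (6 / 5) ^ n := by rw [← mul_pow]; norm_num
  have h6 : (0 : ℝ) < (5 / 4) ^ n := by positivity
  push_cast at h
  rw [h5] at h
  rw [h3]
  nlinarith

/-! ### Sums over words -/

/-- The length `1 / (q_n (q_n + q_{n-1}))` of the cylinder with continuants
`(q_n, q_{n-1}) = x`. -/
noncomputable def cyl (x : ℕ × ℕ) : ℝ := 1 / ((x.1 : ℝ) * (x.1 + x.2))

theorem cyl_nonneg (x : ℕ × ℕ) : 0 ≤ cyl x := by unfold cyl; positivity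

/-- A cylinder is the disjoint union of its subcylinders: the lengths telescope. -/
theorem tsum_cyl_step (x : ℕ × ℕ) (hx : 0 < x.1) :
    ∑' a : ℕ+, ENNReal.ofReal (cyl ((a : ℕ) * x.1 + x.2, x.1)) = ENNReal.ofReal (cyl x) := by
  rw [tsum_pnat_eq_tsum_succ (f := fun a : ℕ => ENNReal.ofReal (cyl (a * x.1 + x.2, x.1)))]
  have hp : (0 : ℝ) < x.1 := by exact_mod_cast hx
  have hr : (0 : ℝ) ≤ x.2 := by positivity
  let g : ℕ → ℝ := fun k => 1 / (x.1 * (((k : ℝ) + 1) * x.1 + x.2))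
  have hterm : ∀ k : ℕ, cyl ((k + 1) * x.1 + x.2, x.1) = g k - g (k + 1) := by
    intro k
    have h1 : ((k : ℝ) + 1) * x.1 + x.2 ≠ 0 := by positivity
    have h2 : ((k : ℝ) + 1 + 1) * x.1 + x.2 ≠ 0 := by positivity
    have h3 : ((k : ℝ) + 1) * x.1 + x.2 + x.1 ≠ 0 := by positivity
    simp only [cyl, g]
    push_cast
    field_simp
    ring
  have hg : Tendsto g atTop (nhds 0) := by
    have ht : Tendsto (fun k : ℕ => (x.1 : ℝ) * (((k : ℝ) + 1) * x.1 + x.2)) atTop atTop := by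
      refine Tendsto.const_mul_atTop hp (tendsto_atTop_add_const_right _ _ ?_)
      exact (tendsto_atTop_add_const_right _ _ tendsto_natCast_atTop_atTop).atTop_mul_const hp
    simp only [g, one_div]
    exact ht.inv_tendsto_atTop
  have hsum : HasSum (fun k : ℕ => cyl ((k + 1) * x.1 + x.2, x.1)) (cyl x) := by
    rw [hasSum_iff_tendsto_nat_of_nonneg (fun _ => cyl_nonneg _)]
    simp_rw [hterm, Finset.sum_range_sub']
    have : cyl x = g 0 - 0 := by simp [cyl, g]
    rw [this]
    exact tendsto_const_nhds.sub hg
  rw [← ENNReal.ofReal_tsum_of_nonneg (fun _ => cyl_nonneg _) hsum.summable, hsum.tsum_eq]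

theorem tsum_cyl_state (n : ℕ) : ∀ x : ℕ × ℕ, 0 < x.1 →
    ∑' v : Fin n → ℕ+, ENNReal.ofReal (cyl (contState x (wordOf v))) = ENNReal.ofReal (cyl x) := by
  induction n with
  | zero => intro x _; simp [contState, wordOf]
  | succ n ih =>
    intro x hx
    rw [tsum_word_succ n (fun l => ENNReal.ofReal (cyl (contState x l))), ← tsum_cyl_step x hx]
    refine tsum_congr fun a => ?_
    simp_rw [contState_cons]
    exact ih _ (lt_of_lt_of_le hx (step_le a))

/-- The cylinders of order `n` have total length `1`. -/
theorem tsum_cyl (n : ℕ) :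
    ∑' v : Fin n → ℕ+, ENNReal.ofReal (cyl (contState (1, 0) (wordOf v))) = 1 := by
  rw [tsum_cyl_state n (1, 0) one_pos]
  simp [cyl]

theorem cyl_le {n : ℕ} (v : Fin n → ℕ+) :
    cyl (contState (1, 0) (wordOf v)) ≤ (contQ (wordOf v) : ℝ) ^ (-2 : ℝ) := by
  have h := one_le_contQ v
  have h3 : ((contState (1, 0) (wordOf v)).1 : ℝ) = contQ (wordOf v) := rfl
  have h4 : (0 : ℝ) ≤ (contState (1, 0) (wordOf v)).2 := by positivity
  rw [Real.rpow_neg (by linarith), Real.rpow_two, ← one_div]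
  unfold cyl
  rw [h3]
  apply one_div_le_one_div_of_le (by positivity)
  nlinarith

theorem le_two_mul_cyl {n : ℕ} (v : Fin n → ℕ+) :
    (contQ (wordOf v) : ℝ) ^ (-2 : ℝ) ≤ 2 * cyl (contState (1, 0) (wordOf v)) := by
  have h := one_le_contQ v
  have h3 : ((contState (1, 0) (wordOf v)).1 : ℝ) = contQ (wordOf v) := rfl
  have h4 : (0 : ℝ) ≤ (contState (1, 0) (wordOf v)).2 := by positivity
  have h2 : ((contState (1, 0) (wordOf v)).2 : ℝ) ≤ contQ (wordOf v) := by
    exact_mod_cast (contState_spec v (1, 0) one_pos zero_le_one).2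
  rw [Real.rpow_neg (by linarith), Real.rpow_two]
  unfold cyl
  rw [h3, mul_one_div, ← one_div, div_le_div_iff₀ (by positivity) (by positivity)]
  nlinarith

theorem tsum_inv_state_eq_top (n : ℕ) : ∀ x : ℕ × ℕ, 0 < x.1 →
    ∑' v : Fin (n + 1) → ℕ+,
      ENNReal.ofReal (((contState x (wordOf v)).1 : ℝ)⁻¹) = ⊤ := by
  induction n with
  | zero =>
    intro x hx
    rw [tsum_word_succ 0 (fun l => ENNReal.ofReal (((contState x l).1 : ℝ)⁻¹))]
    have hC : (0 : ℝ) < ((x.1 + x.2 : ℕ) : ℝ) := by exact_mod_cast Nat.add_pos_left hx _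
    have hharm : ∑' a : ℕ+, ENNReal.ofReal (((a : ℕ) : ℝ)⁻¹) = ⊤ := by
      rw [tsum_pnat_eq_tsum_succ (f := fun a : ℕ => ENNReal.ofReal ((a : ℝ)⁻¹))]
      by_contra hne
      have hs : Summable fun k : ℕ => (((k + 1 : ℕ) : ℝ)⁻¹) := by
        have := ENNReal.summable_toReal hne
        refine this.congr fun k => ?_
        rw [ENNReal.toReal_ofReal (by positivity)]
      exact Real.not_summable_natCast_inv ((summable_nat_add_iff 1).1 hs)
    rw [eq_top_iff]
    calc (⊤ : ℝ≥0∞)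
        = ENNReal.ofReal (((x.1 + x.2 : ℕ) : ℝ)⁻¹) *
            ∑' a : ℕ+, ENNReal.ofReal (((a : ℕ) : ℝ)⁻¹) := by
          rw [hharm, ENNReal.mul_top]
          simpa using hC
      _ = ∑' a : ℕ+, ENNReal.ofReal (((x.1 + x.2 : ℕ) : ℝ)⁻¹) *
            ENNReal.ofReal (((a : ℕ) : ℝ)⁻¹) := ENNReal.tsum_mul_left.symm
      _ ≤ _ := by
          refine ENNReal.tsum_le_tsum fun a => ?_
          have ha : (1 : ℝ) ≤ (a : ℕ) := by exact_mod_cast a.pos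
          have hp : (0 : ℝ) < x.1 := by exact_mod_cast hx
          have hr : (0 : ℝ) ≤ x.2 := by positivity
          rw [← ENNReal.ofReal_mul (by positivity), ← mul_inv]
          simp only [tsum_fintype, Finset.univ_unique, Finset.sum_singleton, contState_cons]
          apply ENNReal.ofReal_le_ofReal
          simp only [wordOf, List.ofFn_zero, contState, List.foldl_nil]
          push_cast
          apply inv_anti₀ (by positivity)
          nlinarith
  | succ n ih =>
    intro x hx
    rw [tsum_word_succ (n + 1) (fun l => ENNReal.ofReal (((contState x l).1 : ℝ)⁻¹))]
    simp_rw [contState_cons]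
    rw [tsum_congr (fun a : ℕ+ => ih _ (lt_of_lt_of_le hx (step_le a)))]
    exact ENNReal.tsum_const_eq_top_of_ne_zero ENNReal.top_ne_zero

/-- Since `q_{k+1} ≥ a q_k`, the sum of `q_n ^ (-t)` is at most `ζ(t) ^ n`. -/
theorem tsum_rpow_state_le {t : ℝ} (ht : 0 ≤ t) (n : ℕ) : ∀ x : ℕ × ℕ, 0 < x.1 →
    ∑' v : Fin n → ℕ+, ENNReal.ofReal (((contState x (wordOf v)).1 : ℝ) ^ (-t)) ≤
      ENNReal.ofReal ((x.1 : ℝ) ^ (-t)) *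
        (∑' a : ℕ+, ENNReal.ofReal (((a : ℕ) : ℝ) ^ (-t))) ^ n := by
  induction n with
  | zero => intro x _; simp [contState, wordOf]
  | succ n ih =>
    intro x hx
    rw [tsum_word_succ n (fun l => ENNReal.ofReal (((contState x l).1 : ℝ) ^ (-t)))]
    simp_rw [contState_cons]
    calc _ ≤ ∑' a : ℕ+, (ENNReal.ofReal ((x.1 : ℝ) ^ (-t)) *
            ENNReal.ofReal (((a : ℕ) : ℝ) ^ (-t))) *
              (∑' a : ℕ+, ENNReal.ofReal (((a : ℕ) : ℝ) ^ (-t))) ^ n := by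
          refine ENNReal.tsum_le_tsum fun a => ?_
          refine (ih _ (lt_of_lt_of_le hx (step_le a))).trans ?_
          gcongr
          rw [← ENNReal.ofReal_mul (by positivity), ← Real.mul_rpow (by positivity) (by positivity)]
          apply ENNReal.ofReal_le_ofReal
          have ha : (0 : ℝ) < (a : ℕ) := by exact_mod_cast a.pos
          have hp : (0 : ℝ) < x.1 := by exact_mod_cast hx
          have hr : (0 : ℝ) ≤ x.2 := by positivity
          apply Real.rpow_le_rpow_of_nonpos (by positivity) _ (by linarith)
          push_cast
          linarith
      _ = _ := by rw [ENNReal.tsum_mul_right, ENNReal.tsum_mul_left, pow_succ]; ring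

/-! ### Bounds on the pressure -/

theorem pressure_nonpos_of_eventually {B s : ℝ} (h : ∀ᶠ n : ℕ in atTop, presSum B s n ≤ 1) :
    pressure B s ≤ 0 := by
  refine limsup_le_of_le (by isBoundedDefault) ?_
  filter_upwards [h] with n hn
  have h1 : ENNReal.log (presSum B s n) ≤ 0 := by
    rw [← ENNReal.log_one]
    exact ENNReal.log_monotone hn
  exact mul_nonpos_of_nonneg_of_nonpos (by exact_mod_cast (by positivity : (0 : ℝ) ≤ (n : ℝ)⁻¹)) h1

theorem pressure_pos_of_eventually {B s δ : ℝ} (hδ : 0 < δ)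
    (h : ∀ᶠ n : ℕ in atTop, ENNReal.ofReal (Real.exp (n * δ)) ≤ presSum B s n) :
    0 < pressure B s := by
  have hle : (δ : EReal) ≤ pressure B s := by
    refine le_limsup_of_frequently_le ?_ (by isBoundedDefault)
    refine Eventually.frequently ?_
    filter_upwards [h, eventually_gt_atTop 0] with n hn h0
    have h0' : (0 : ℝ) < n := by exact_mod_cast h0
    have h1 : (((n : ℝ) * δ : ℝ) : EReal) ≤ ENNReal.log (presSum B s n) := by
      refine le_trans ?_ (ENNReal.log_monotone hn)
      rw [ENNReal.log_ofReal_of_pos (Real.exp_pos _), Real.log_exp]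
    calc (δ : EReal) = (((n : ℝ)⁻¹ : ℝ) : EReal) * (((n : ℝ) * δ : ℝ) : EReal) := by
          rw [← EReal.coe_mul]
          congr 1
          field_simp
      _ ≤ _ := mul_le_mul_of_nonneg_left h1 (by exact_mod_cast (by positivity : (0 : ℝ) ≤ (n : ℝ)⁻¹))
  exact lt_of_lt_of_le (by exact_mod_cast hδ) hle

theorem presSum_eq {B : ℝ} (hB : 0 < B) (s : ℝ) (n : ℕ) :
    presSum B s n = ENNReal.ofReal (B ^ (-(n : ℝ) * (3 * s - 1 - s ^ 2))) *
      ∑' v : Fin n → ℕ+, ENNReal.ofReal ((contQ (wordOf v) : ℝ) ^ (-(2 * s))) := by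
  rw [← ENNReal.tsum_mul_left]
  refine tsum_congr fun v => ?_
  rw [← ENNReal.ofReal_mul (by positivity)]
  rfl

theorem pressure_one {B : ℝ} (hB : 1 < B) : pressure B 1 ≤ 0 := by
  apply pressure_nonpos_of_eventually
  filter_upwards [(tendsto_pow_atTop_atTop_of_one_lt hB).eventually_ge_atTop 2] with n hn
  rw [presSum_eq (by linarith)]
  have h1 : ∑' v : Fin n → ℕ+, ENNReal.ofReal ((contQ (wordOf v) : ℝ) ^ (-(2 * (1 : ℝ)))) ≤ 2 := by
    calc _ ≤ ∑' v : Fin n → ℕ+, 2 * ENNReal.ofReal (cyl (contState (1, 0) (wordOf v))) := by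
          refine ENNReal.tsum_le_tsum fun v => ?_
          have := ENNReal.ofReal_le_ofReal (le_two_mul_cyl v)
          rw [ENNReal.ofReal_mul (by norm_num)] at this
          simpa using this
      _ = 2 := by rw [ENNReal.tsum_mul_left, tsum_cyl, mul_one]
  have h2 : B ^ (-(n : ℝ) * (3 * 1 - 1 - 1 ^ 2)) ≤ 1 / 2 := by
    have : -(n : ℝ) * (3 * 1 - 1 - 1 ^ 2) = -(n : ℝ) := by ring
    rw [this, Real.rpow_neg (by linarith), Real.rpow_natCast, ← one_div]
    exact one_div_le_one_div_of_le (by norm_num) hn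
  calc _ ≤ ENNReal.ofReal (1 / 2) * 2 := by gcongr
    _ = 1 := by
      rw [← ENNReal.ofReal_ofNat, ← ENNReal.ofReal_mul (by norm_num)]
      norm_num

theorem pressure_pos_of_le_half {B s : ℝ} (hB : 1 < B) (hs : s ≤ 1 / 2) : 0 < pressure B s := by
  apply pressure_pos_of_eventually one_pos
  filter_upwards [eventually_gt_atTop 0] with n hn
  obtain ⟨m, rfl⟩ := Nat.exists_eq_succ_of_ne_zero hn.ne'
  have hB0 : 0 < B := by linarith
  have h1 : ∑' v : Fin (m + 1) → ℕ+, ENNReal.ofReal ((contQ (wordOf v) : ℝ) ^ (-(2 * s))) = ⊤ := by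
    rw [eq_top_iff, ← tsum_inv_state_eq_top m (1, 0) one_pos]
    refine ENNReal.tsum_le_tsum fun v => ENNReal.ofReal_le_ofReal ?_
    rw [← Real.rpow_neg_one]
    exact Real.rpow_le_rpow_of_exponent_le (one_le_contQ v) (by linarith)
  rw [presSum_eq hB0, h1, ENNReal.mul_top]
  · exact le_top
  · simpa using Real.rpow_pos_of_pos hB0 _

theorem pressure_pos_of_near_one {B s ε : ℝ} (hB : 1 < B) (hε : 0 < ε) (hs : s ≤ 1 - ε)
    (hBε : Real.log B < ε * Real.log (5 / 4)) : 0 < pressure B s := by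
  have hl : 0 < Real.log (5 / 4) := Real.log_pos (by norm_num)
  apply pressure_pos_of_eventually (mul_pos hε hl)
  filter_upwards [eventually_ge_atTop 3] with n hn
  have hB0 : 0 < B := by linarith
  have hn0 : (0 : ℝ) ≤ n := by positivity
  rw [presSum_eq hB0]
  have h1 : ENNReal.ofReal (Real.exp (n * (2 * ε * Real.log (5 / 4)))) ≤
      ∑' v : Fin n → ℕ+, ENNReal.ofReal ((contQ (wordOf v) : ℝ) ^ (-(2 * s))) := by
    rw [← mul_one (ENNReal.ofReal _), ← tsum_cyl n, ← ENNReal.tsum_mul_left]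
    refine ENNReal.tsum_le_tsum fun v => ?_
    rw [← ENNReal.ofReal_mul (by positivity)]
    apply ENNReal.ofReal_le_ofReal
    have hq := one_le_contQ v
    have hexp : Real.exp (n * (2 * ε * Real.log (5 / 4))) = ((5 / 4 : ℝ) ^ n) ^ (2 * ε) := by
      rw [Real.rpow_def_of_pos (by positivity), Real.log_pow]
      congr 1
      ring
    calc _ ≤ (contQ (wordOf v) : ℝ) ^ (2 * ε) * (contQ (wordOf v) : ℝ) ^ (-2 : ℝ) := by
          rw [hexp]
          refine mul_le_mul ?_ (cyl_le v) (cyl_nonneg _) (by positivity)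
          exact Real.rpow_le_rpow (by positivity) (contQ_growth hn v) (by linarith)
      _ = (contQ (wordOf v) : ℝ) ^ (2 * ε + -2) := (Real.rpow_add (by linarith) _ _).symm
      _ ≤ _ := Real.rpow_le_rpow_of_exponent_le hq (by linarith)
  have h2 : Real.exp (-(n * (ε * Real.log (5 / 4)))) ≤ B ^ (-(n : ℝ) * (3 * s - 1 - s ^ 2)) := by
    -- `3s - 1 - s² ≤ 1` for `s ≤ 1`
    calc _ ≤ B ^ (-(n : ℝ)) := by
          rw [Real.rpow_def_of_pos hB0]
          apply Real.exp_le_exp.2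
          nlinarith
      _ ≤ _ := by
          apply Real.rpow_le_rpow_of_exponent_le hB.le
          have : 3 * s - 1 - s ^ 2 ≤ 1 := by nlinarith
          nlinarith
  calc ENNReal.ofReal (Real.exp (n * (ε * Real.log (5 / 4))))
      = ENNReal.ofReal (Real.exp (-(n * (ε * Real.log (5 / 4))))) *
          ENNReal.ofReal (Real.exp (n * (2 * ε * Real.log (5 / 4)))) := by
        rw [← ENNReal.ofReal_mul (by positivity), ← Real.exp_add]
        congr 2
        ring
    _ ≤ _ := by gcongr

theorem pressure_nonpos_of_large {s : ℝ} (hs : 1 / 2 < s) (hs1 : s < 1) :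
    ∀ᶠ B : ℝ in atTop, pressure B s ≤ 0 := by
  set Z : ℝ≥0∞ := ∑' a : ℕ+, ENNReal.ofReal (((a : ℕ) : ℝ) ^ (-(2 * s))) with hZ
  have hZtop : Z ≠ ⊤ := by
    rw [hZ, tsum_pnat_eq_tsum_succ (f := fun a : ℕ => ENNReal.ofReal ((a : ℝ) ^ (-(2 * s))))]
    have hsum : Summable fun n : ℕ => (n : ℝ) ^ (-(2 * s)) :=
      Real.summable_nat_rpow.2 (by linarith)
    exact ((summable_nat_add_iff 1).2 hsum).tsum_ofReal_ne_top
  have hd : 0 < 3 * s - 1 - s ^ 2 := by nlinarith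
  filter_upwards [eventually_gt_atTop 0,
    (tendsto_rpow_atTop hd).eventually_ge_atTop (Z.toReal + 1)] with B hB0 hB
  apply pressure_nonpos_of_eventually
  refine Eventually.of_forall fun n => ?_
  have hC : ENNReal.ofReal (B ^ (-(3 * s - 1 - s ^ 2))) * Z ≤ 1 := by
    rw [← ENNReal.ofReal_toReal hZtop, ← ENNReal.ofReal_mul (by positivity),
      ENNReal.ofReal_le_one, Real.rpow_neg hB0.le]
    rw [inv_mul_le_iff₀ (by positivity)]
    linarith
  have h1 := tsum_rpow_state_le (t := 2 * s) (by linarith) n (1, 0) one_pos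
  rw [Nat.cast_one, Real.one_rpow, ENNReal.ofReal_one, one_mul] at h1
  rw [presSum_eq hB0]
  have h2 : B ^ (-(n : ℝ) * (3 * s - 1 - s ^ 2)) = (B ^ (-(3 * s - 1 - s ^ 2))) ^ n := by
    rw [← Real.rpow_natCast _ n, ← Real.rpow_mul hB0.le]
    congr 1
    ring
  rw [h2, ENNReal.ofReal_pow (by positivity)]
  calc _ ≤ ENNReal.ofReal (B ^ (-(3 * s - 1 - s ^ 2))) ^ n * Z ^ n := by
        gcongr
        exact h1
    _ = (ENNReal.ofReal (B ^ (-(3 * s - 1 - s ^ 2))) * Z) ^ n := (mul_pow _ _ _).symm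
    _ ≤ 1 := pow_le_one₀ zero_le hC

/-! ### The limits of `s_B` -/

theorem sB_le {B s : ℝ} (hs : 0 ≤ s) (h : pressure B s ≤ 0) : sB B ≤ s :=
  csInf_le ⟨0, fun _ h => h.1⟩ ⟨hs, h⟩

/-- The hypothesis `1 < B` makes the set defining `sB B` nonempty, so that its infimum is not the
junk value `0`. -/
theorem le_sB {B t : ℝ} (hB : 1 < B) (h : ∀ s ≤ t, 0 < pressure B s) : t ≤ sB B :=
  le_csInf ⟨1, zero_le_one, pressure_one hB⟩ fun s hs => by
    by_contra! hlt
    exact absurd hs.2 (not_le.2 (h s hlt.le))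

theorem sB_limits :
    Filter.Tendsto sB (nhdsWithin 1 (Set.Ioi 1)) (nhds 1) ∧
    Filter.Tendsto sB Filter.atTop (nhds (1 / 2)) := by
  constructor
  · rw [tendsto_order]
    constructor
    · intro a ha
      have hl : 0 < Real.log (5 / 4) := Real.log_pos (by norm_num)
      have hlog : Tendsto Real.log (nhdsWithin 1 (Set.Ioi 1)) (nhds 0) := by
        have := (Real.continuousAt_log one_ne_zero).tendsto
        rw [Real.log_one] at this
        exact this.mono_left nhdsWithin_le_nhds
      have hpos : 0 < (1 - a) / 2 * Real.log (5 / 4) := mul_pos (by linarith) hl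
      filter_upwards [self_mem_nhdsWithin, hlog.eventually_lt_const hpos] with B hB hBl
      have : 1 - (1 - a) / 2 ≤ sB B :=
        le_sB hB fun s hs => pressure_pos_of_near_one hB (by linarith) hs hBl
      linarith
    · intro a ha
      filter_upwards [self_mem_nhdsWithin] with B hB
      exact (sB_le zero_le_one (pressure_one hB)).trans_lt ha
  · rw [tendsto_order]
    constructor
    · intro a ha
      filter_upwards [eventually_gt_atTop 1] with B hB
      exact ha.trans_le (le_sB hB fun s hs => pressure_pos_of_le_half hB hs)
    · intro a ha
      obtain ⟨s, hs, hsa⟩ := exists_between (lt_min ha (by norm_num : (1 / 2 : ℝ) < 1))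
      filter_upwards [pressure_nonpos_of_large hs (hsa.trans_le (min_le_right _ _))] with B hB
      exact (sB_le (by linarith) hB).trans_lt (hsa.trans_le (min_le_left _ _))
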